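/- Let (M_i)_{i∈I} be a family of almost absolutely pure R-modules. Then both the direct product ∏_{i∈I} M_i and the direct sum ⊕_{i∈I} M_i are almost absolutely pure. -/

import Mathlib

universe u

open CategoryTheory DirectSum

/-- A module `E` is almost absolutely pure if `Ext¹ᴿ(N, E)` is almost zero for every
finitely presented module `N`. -/
def IsAlmostAbsolutelyPure {R : Type u} [CommRing R] (m : Ideal R)
    (E : Type u) [AddCommGroup E] [Module R E] : Prop :=
  ∀ (N : Type u) [AddCommGroup N] [Module R N], Module.FinitePresentation R N →
    ∀ s ∈ m, ∀ x : ((Ext R (ModuleCat.{u} R) 1).obj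
        (Opposite.op (ModuleCat.of R N))).obj (ModuleCat.of R E),
      s • x = 0

/-!
If `0 → K → F → N → 0` is exact with `F` projective, then `Ext¹(N, E)` is the cokernel of
`Hom(F, E) → Hom(K, E)`, so `s` kills it exactly when `s • h` extends to `F` for every `h : K → E`.
For `N` finitely presented, `F` can be taken finite free and `K` finitely generated. Extensions
into a product are found coordinatewise; a map from a finitely generated `K` to a direct sum has
only finitely many nonzero coordinates, so it is again extended coordinatewise.
-/

section Extension

variable {R F : Type*} [CommRing R] [AddCommGroup F] [Module R F]

/-- For every linear map `h : K → E`, the multiple `s • h` extends to the ambient module `F` of the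
submodule `K`: that is, `s` kills the cokernel of the restriction `Hom(F, E) → Hom(K, E)`. This is
the elementwise form of `s • Ext¹(F ⧸ K, E) = 0` for projective `F`. -/
def HasSMulExtension (s : R) (K : Submodule R F) (E : Type*) [AddCommGroup E] [Module R E] :
    Prop :=
  ∀ h : K →ₗ[R] E, ∃ g : F →ₗ[R] E, g ∘ₗ K.subtype = s • h

theorem HasSMulExtension.pi {s : R} {K : Submodule R F} {ι : Type*} {M : ι → Type*}
    [∀ i, AddCommGroup (M i)] [∀ i, Module R (M i)] (hM : ∀ i, HasSMulExtension s K (M i)) :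
    HasSMulExtension s K (∀ i, M i) := by
  intro h
  choose g hg using fun i ↦ hM i (LinearMap.proj i ∘ₗ h)
  refine ⟨LinearMap.pi g, ?_⟩
  ext x i
  exact LinearMap.congr_fun (hg i) x

theorem exists_finset_component_comp_eq_zero {A K ι : Type*} [Semiring A] [AddCommMonoid K]
    [Module A K] [Module.Finite A K] {M : ι → Type*} [∀ i, AddCommMonoid (M i)]
    [∀ i, Module A (M i)] (h : K →ₗ[A] ⨁ i, M i) :
    ∃ S : Finset ι, ∀ i ∉ S, DirectSum.component A ι M i ∘ₗ h = 0 := by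
  classical
  obtain ⟨T, hT⟩ := Module.Finite.fg_top (R := A) (M := K)
  refine ⟨T.biUnion fun t ↦ (h t).support, fun i hi ↦ LinearMap.ext_on hT fun t ht ↦ ?_⟩
  by_contra hne
  exact hi (Finset.mem_biUnion.2 ⟨t, ht, DFinsupp.mem_support_iff.2 hne⟩)

theorem HasSMulExtension.directSum {s : R} {K : Submodule R F} (hK : K.FG) {ι : Type*}
    {M : ι → Type*} [∀ i, AddCommGroup (M i)] [∀ i, Module R (M i)]
    (hM : ∀ i, HasSMulExtension s K (M i)) : HasSMulExtension s K (⨁ i, M i) := by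
  classical
  intro h
  have : Module.Finite R K := Module.Finite.iff_fg.2 hK
  obtain ⟨S, hS⟩ := exists_finset_component_comp_eq_zero h
  choose g hg using fun i ↦ hM i (DirectSum.component R ι M i ∘ₗ h)
  refine ⟨DirectSum.lmk R ι M S ∘ₗ LinearMap.pi fun i ↦ g i, LinearMap.ext fun x ↦ ?_⟩
  refine DirectSum.ext_component R fun i ↦ ?_
  by_cases hi : i ∈ S
  · exact (DirectSum.mk_apply_of_mem hi).trans (LinearMap.congr_fun (hg i) x)
  · have hxi : DirectSum.component R ι M i (h x) = 0 := LinearMap.congr_fun (hS i hi) x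
    rw [LinearMap.smul_apply, map_smul, hxi, smul_zero]
    exact DirectSum.mk_apply_of_notMem hi

variable {F' N E : Type*} [AddCommGroup F'] [Module R F'] [AddCommGroup N] [Module R N]
  [AddCommGroup E] [Module R E]

/- Lift `p'` to `a : F' → F` and `p` to `b : F → F'`. An extension `g` of `s • h ∘ b` to `F` gives
the map `g ∘ a`, which restricts to `s • h ∘ b ∘ a` on `ker p'`; the error is corrected globally
because `b ∘ a - id` maps all of `F'` into `ker p'`. -/
theorem HasSMulExtension.ker_of_projective [Module.Projective R F] [Module.Projective R F']
    {s : R} {p : F →ₗ[R] N} {p' : F' →ₗ[R] N} (hp : Function.Surjective p)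
    (hp' : Function.Surjective p') (hE : HasSMulExtension s p.ker E) :
    HasSMulExtension s p'.ker E := by
  intro h
  obtain ⟨a, ha⟩ := Module.projective_lifting_property p p' hp
  obtain ⟨b, hb⟩ := Module.projective_lifting_property p' p hp'
  have hpa (x : F') : p (a x) = p' x := LinearMap.congr_fun ha x
  have hpb (y : F) : p' (b y) = p y := LinearMap.congr_fun hb y
  let bKer : p.ker →ₗ[R] p'.ker := b.restrict fun y hy ↦ (hpb y).trans hy
  let error : F' →ₗ[R] p'.ker :=
    (b ∘ₗ a - LinearMap.id).codRestrict p'.ker fun x ↦ by simp [hpa, hpb]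
  obtain ⟨g, hg⟩ := hE (h ∘ₗ bKer)
  refine ⟨g ∘ₗ a - s • (h ∘ₗ error), LinearMap.ext fun x ↦ ?_⟩
  let ax : p.ker := ⟨a x, (hpa x).trans x.2⟩
  have hax : bKer ax - error x = x := Subtype.ext (sub_sub_cancel (b (a x)) (x : F'))
  calc g (a x) - s • h (error x) = s • h (bKer ax) - s • h (error x) :=
        congrArg (· - s • h (error x)) (LinearMap.congr_fun hg ax)
    _ = s • h x := by rw [← smul_sub, ← map_sub, hax]

theorem hasSMulExtension_ker_iff_of_exact {P₂ P₁ : Type*} [AddCommGroup P₂] [Module R P₂]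
    [AddCommGroup P₁] [Module R P₁] {d₂ : P₂ →ₗ[R] P₁} {d₁ : P₁ →ₗ[R] F} {p : F →ₗ[R] N}
    (h₂₁ : Function.Exact d₂ d₁) (h₁₀ : Function.Exact d₁ p) (s : R) :
    HasSMulExtension s p.ker E ↔
      ∀ f : P₁ →ₗ[R] E, f ∘ₗ d₂ = 0 → ∃ g : F →ₗ[R] E, g ∘ₗ d₁ = s • f := by
  let d : P₁ →ₗ[R] p.ker := d₁.codRestrict p.ker h₁₀.apply_apply_eq_zero
  have hd_surj : Function.Surjective d := fun ⟨y, hy⟩ ↦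
    let ⟨x, hx⟩ := (h₁₀ y).1 hy
    ⟨x, Subtype.ext hx⟩
  have hd_exact : Function.Exact d₂ d := fun x ↦ Subtype.ext_iff.trans (h₂₁ x)
  have factors (f : P₁ →ₗ[R] E) : f ∘ₗ d₂ = 0 ↔ ∃ h : p.ker →ₗ[R] E, h ∘ₗ d = f :=
    LinearMap.exact_lcomp_of_exact_of_surjective E hd_exact hd_surj f
  have extends_iff (h : p.ker →ₗ[R] E) (g : F →ₗ[R] E) :
      g ∘ₗ d₁ = s • h ∘ₗ d ↔ g ∘ₗ p.ker.subtype = s • h :=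
    LinearMap.cancel_right (f := g ∘ₗ p.ker.subtype) (f' := s • h) hd_surj
  simp [HasSMulExtension, factors, extends_iff]

end Extension

section Ext

theorem mem_annihilator_homology_iff {R : Type*} [Ring R] (S : ShortComplex (ModuleCat R))
    (s : R) :
    s ∈ Module.annihilator R S.homology ↔ ∀ x : S.X₂, S.g x = 0 → ∃ y : S.X₁, S.f y = s • x := by
  let e : S.homology ≃ₗ[R] S.g.hom.ker ⧸ S.moduleCatToCycles.range :=
    S.moduleCatHomologyIso.toLinearEquiv
  simp only [e.annihilator_eq, Submodule.annihilator_quotient, Submodule.mem_colon, Set.mem_univ,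
    true_imp_iff, LinearMap.mem_range, Subtype.ext_iff, Subtype.forall, LinearMap.mem_ker]
  rfl

theorem mem_annihilator_ext_succ_iff {R C : Type*} [Ring R] [Category* C] [Abelian C]
    [Linear R C] [EnoughProjectives C] {X : C} (P : ProjectiveResolution X) (Y : C) (n : ℕ)
    (s : R) :
    s ∈ Module.annihilator R (((Ext R C (n + 1)).obj (Opposite.op X)).obj Y) ↔
      ∀ f : P.complex.X (n + 1) ⟶ Y, P.complex.d (n + 2) (n + 1) ≫ f = 0 →
        ∃ g : P.complex.X n ⟶ Y, P.complex.d (n + 1) n ≫ g = s • f := by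
  let K := P.complex.linearYonedaObj R Y
  let e := P.isoExt (R := R) (n + 1) Y ≪≫
    ShortComplex.homologyMapIso (K.isoSc' n (n + 1) (n + 2) (by simp) (by simp))
  rw [e.toLinearEquiv.annihilator_eq, mem_annihilator_homology_iff]
  rfl

variable {R : Type u} [CommRing R]

theorem mem_annihilator_ext_one_iff_hasSMulExtension_ker {F N : Type u} [AddCommGroup F]
    [Module R F] [Module.Projective R F] [AddCommGroup N] [Module R N] {p : F →ₗ[R] N}
    (hp : Function.Surjective p) (E : Type u) [AddCommGroup E] [Module R E] (s : R) :
    s ∈ Module.annihilator R (((Ext R (ModuleCat.{u} R) 1).obj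
        (Opposite.op (ModuleCat.of R N))).obj (ModuleCat.of R E)) ↔
      HasSMulExtension s p.ker E := by
  let P := projectiveResolution (ModuleCat.of R N)
  let ε : P.complex.X 0 →ₗ[R] N := (P.π.f 0).hom
  have hε : Function.Surjective ε := (ModuleCat.epi_iff_surjective (P.π.f 0)).1 inferInstance
  have : Module.Projective R (P.complex.X 0) :=
    (IsProjective.iff_projective _).2 (P.projective 0)
  have h₁₀ : Function.Exact (P.complex.d 1 0).hom ε :=
    (ShortComplex.ShortExact.moduleCat_exact_iff_function_exact _).1 P.exact₀
  have h₂₁ : Function.Exact (P.complex.d 2 1).hom (P.complex.d 1 0).hom :=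
    (ShortComplex.ShortExact.moduleCat_exact_iff_function_exact _).1 (P.exact_succ 0)
  calc
    _ ↔ _ := mem_annihilator_ext_succ_iff P (ModuleCat.of R E) 0 s
    _ ↔ ∀ f : P.complex.X 1 →ₗ[R] E, f ∘ₗ (P.complex.d 2 1).hom = 0 →
          ∃ g : P.complex.X 0 →ₗ[R] E, g ∘ₗ (P.complex.d 1 0).hom = s • f :=
        ModuleCat.homEquiv.forall_congr fun _ ↦ imp_congr ModuleCat.hom_ext_iff <|
          ModuleCat.homEquiv.exists_congr fun _ ↦ ModuleCat.hom_ext_iff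
    _ ↔ HasSMulExtension s ε.ker E := (hasSMulExtension_ker_iff_of_exact h₂₁ h₁₀ s).symm
    _ ↔ HasSMulExtension s p.ker E := ⟨.ker_of_projective hε hp, .ker_of_projective hp hε⟩

theorem isAlmostAbsolutelyPure_iff_hasSMulExtension {m : Ideal R} {E : Type u} [AddCommGroup E]
    [Module R E] :
    IsAlmostAbsolutelyPure m E ↔
      ∀ (n : ℕ) (K : Submodule R (Fin n → R)), K.FG → ∀ s ∈ m, HasSMulExtension s K E := by
  constructor
  · intro hE n K hK s hs
    have hN : Module.FinitePresentation R ((Fin n → R) ⧸ K) :=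
      Module.finitePresentation_of_surjective K.mkQ K.mkQ_surjective (by rwa [K.ker_mkQ])
    rw [← K.ker_mkQ, ← mem_annihilator_ext_one_iff_hasSMulExtension_ker K.mkQ_surjective,
      Module.mem_annihilator]
    exact hE _ hN s hs
  · intro hE N _ _ hN s hs
    obtain ⟨n, p, hp⟩ := Module.Finite.exists_fin' R N
    rw [← Module.mem_annihilator, mem_annihilator_ext_one_iff_hasSMulExtension_ker hp]
    exact hE n p.ker (Module.FinitePresentation.fg_ker p hp) s hs

end Ext

theorem prod_and_directSum_almostAbsolutelyPure_general
    {R : Type u} [CommRing R] (m : Ideal R)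
    (ι : Type u) (M : ι → Type u) [∀ i, AddCommGroup (M i)] [∀ i, Module R (M i)]
    (hM : ∀ i, IsAlmostAbsolutelyPure m (M i)) :
    IsAlmostAbsolutelyPure m (∀ i, M i) ∧ IsAlmostAbsolutelyPure m (⨁ i, M i) := by
  simp only [isAlmostAbsolutelyPure_iff_hasSMulExtension] at hM ⊢
  exact ⟨fun n K hK s hs ↦ .pi fun i ↦ hM i n K hK s hs,
    fun n K hK s hs ↦ .directSum hK fun i ↦ hM i n K hK s hs⟩

/-- Direct products and direct sums of almost absolutely pure
modules are almost absolutely pure. -/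
theorem prod_and_directSum_almostAbsolutelyPure
    {R : Type u} [CommRing R] (m : Ideal R) (hm : m * m = m)
    (ι : Type u) (M : ι → Type u) [∀ i, AddCommGroup (M i)] [∀ i, Module R (M i)]
    (hM : ∀ i, IsAlmostAbsolutelyPure m (M i)) :
    IsAlmostAbsolutelyPure m (∀ i, M i) ∧ IsAlmostAbsolutelyPure m (⨁ i, M i) :=
  prod_and_directSum_almostAbsolutelyPure_general m ι M hM
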